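/- In the multinomial assignment setting, write p_n = n^{-2} and suppose m(n)·p_n/log n → 0 as n → ∞, while for every δ > 0 one has n^{δ}·m(n)·p_n → ∞. Then E[max_{σ ∈ S_n} Σ_{i=1}^n X_{iσ(i)}] = (n·log n / log(log n/(m(n)·p_n)))·(1+o(1)); that is, E[max_σ Σ_i X_{iσ(i)}]·log(log n/(m(n)p_n))/(n·log n) → 1 as n → ∞. -/

import Mathlib

open MeasureTheory Filter Real

noncomputable section

/-- The uniform measure on the `n × n` grid of cells. -/
def cellMeasure (n : ℕ) : Measure (Fin n × Fin n) :=
  ((n : ENNReal) ^ 2)⁻¹ • Measure.count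

/-- The law of `m` i.i.d. points, each uniformly distributed on the `n × n` grid;
under this measure the matrix of cell counts is multinomial `M(m, n²)`. -/
def gridMeasure (m n : ℕ) : Measure (Fin m → Fin n × Fin n) :=
  Measure.pi fun _ => cellMeasure n

/-- `X_{ij}`: the number of the `m` points falling in cell `(i, j)`. -/
def cellCount {m n : ℕ} (i j : Fin n) (ω : Fin m → Fin n × Fin n) : ℕ :=
  (Finset.univ.filter fun k => ω k = (i, j)).card

/-- The assignment sum `S(σ) = ∑ i, X_{i σ(i)}`. -/
def assignSum {m n : ℕ} (σ : Equiv.Perm (Fin n)) (ω : Fin m → Fin n × Fin n) : ℝ :=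
  ∑ i, (cellCount i (σ i) ω : ℝ)

/-- `max_{σ ∈ S_n} S(σ)`. -/
def maxAssign {m n : ℕ} (ω : Fin m → Fin n × Fin n) : ℝ :=
  ⨆ σ : Equiv.Perm (Fin n), assignSum σ ω

/-- `min_{σ ∈ S_n} S(σ)`. -/
def minAssign {m n : ℕ} (ω : Fin m → Fin n × Fin n) : ℝ :=
  ⨅ σ : Equiv.Perm (Fin n), assignSum σ ω

/-- `E[max_{σ ∈ S_n} S(σ)]`. -/
def EmaxAssign (m n : ℕ) : ℝ :=
  ∫ ω, maxAssign ω ∂(gridMeasure m n)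

/-- `E[min_{σ ∈ S_n} S(σ)]`. -/
def EminAssign (m n : ℕ) : ℝ :=
  ∫ ω, minAssign ω ∂(gridMeasure m n)

/-! Write `l = m p_n` for the mean cell count and `Λ = log (log n / l)`.

Upper bound: each `S(σ)` is binomial `B(m, 1 / n)`, so Jensen's inequality and a union bound over
the `n! ≤ n ^ n` permutations give `θ E[max_σ S(σ)] ≤ n log n + n l e^θ`; for `θ = c Λ` with `c < 1`
the second term is negligible.

Lower bound: put `k = ⌈c log n / Λ⌉` and call a cell good if it holds at least `k` points. A
permutation with as few bad cells as possible cannot be improved by a transposition, so its bad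
rows and columns span a rectangle without good cells, and unless this rectangle has more than
`(1 - c) n` rows, `S(σ) ≥ c n k`. After Poissonization the cells are independent and each is good
with probability much larger than `1 / n`, which beats the `4 ^ n` choices of a rectangle. -/

open ProbabilityTheory
open scoped NNReal Nat Topology

lemma measureReal_pi_poissonMeasure_singleton {ι : Type*} [Fintype ι] (r : ι → ℝ≥0)
    (x : ι → ℕ) :
    (Measure.pi fun c => poissonMeasure (r c)).real {x} =
      ∏ c, (exp (-r c) * r c ^ x c / (x c)!) := by
  simp only [measureReal_def, Measure.pi_singleton, ENNReal.toReal_prod]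
  simp only [← measureReal_def, poissonMeasure_real_singleton]

/-- The rates of the independent Poisson variables which, conditioned on having sum `m`, are
distributed as the occupancy numbers of `m` independent letters of law `ν`. -/
def poissonRate {ι : Type*} [MeasurableSpace ι] (m : ℕ) (ν : Measure ι) (c : ι) : ℝ≥0 :=
  m * (ν {c}).toNNReal

lemma coe_poissonRate {ι : Type*} [MeasurableSpace ι] (m : ℕ) (ν : Measure ι) (c : ι) :
    (poissonRate m ν c : ℝ) = m * ν.real {c} := by
  simp [poissonRate, measureReal_def, ENNReal.coe_toNNReal_eq_toReal]

section Occupancy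

variable {ι : Type*} [DecidableEq ι] {m : ℕ}

/-- The occupancy numbers of a word `ω`: how often each letter `c` is used. The matrix of cell
counts is the case of letters in the grid. -/
def occupancy (ω : Fin m → ι) (c : ι) : ℕ :=
  (Finset.univ.filter fun k => ω k = c).card

lemma prod_X_eq_monomial_occupancy [Finite ι] (ω : Fin m → ι) :
    ∏ k, MvPolynomial.X (R := ℝ) (ω k) =
      MvPolynomial.monomial (Finsupp.equivFunOnFinite.symm (occupancy ω)) 1 := by
  have h : Finsupp.equivFunOnFinite.symm (occupancy ω) = ∑ k, Finsupp.single (ω k) 1 := by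
    ext c
    simp [occupancy, Finsupp.finsetSum_apply, Finsupp.single_apply]
  rw [h, MvPolynomial.monomial_sum_one]
  rfl

variable [Fintype ι]

lemma sum_occupancy (ω : Fin m → ι) : ∑ c, occupancy ω c = m := by
  simp [occupancy, Finset.sum_card_fiberwise_eq_card_filter]

-- Both sides are the coefficient of `∏ c, X c ^ x c` in `(∑ c, p c * X c) ^ m`.
lemma sum_prod_filter_occupancy_eq (p : ι → ℝ) {x : ι → ℕ} (hx : ∑ c, x c = m) :
    ∑ ω : Fin m → ι with occupancy ω = x, ∏ k, p (ω k) =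
      Nat.multinomial Finset.univ x * ∏ c, p c ^ x c := by
  have h := MvPolynomial.coeff_linearCombination_X_pow_of_fintype p
    (Finsupp.equivFunOnFinite.symm x) m
  rw [if_pos (by simpa [Finsupp.sum_fintype] using hx),
    Finsupp.multinomial_eq_of_support_subset (Finset.subset_univ _),
    Finsupp.prod_fintype _ _ fun _ => pow_zero _, Fintype.sum_pow, MvPolynomial.coeff_sum] at h
  rw [Finset.sum_filter]
  refine Eq.trans (Finset.sum_congr rfl fun ω _ => ?_) h
  rw [Finset.prod_smul, prod_X_eq_monomial_occupancy, MvPolynomial.coeff_smul,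
    MvPolynomial.coeff_monomial]
  simp

variable [MeasurableSpace ι] [MeasurableSingletonClass ι] (ν : Measure ι) [IsProbabilityMeasure ν]

lemma measureReal_occupancy_eq {x : ι → ℕ} (hx : ∑ c, x c = m) :
    (Measure.pi fun _ : Fin m => ν).real {ω | occupancy ω = x} =
      Nat.multinomial Finset.univ x * ∏ c, ν.real {c} ^ x c := by
  rw [← sum_prod_filter_occupancy_eq (fun c => ν.real {c}) hx, ← Finset.coe_filter_univ,
    ← sum_measureReal_singleton]
  refine Finset.sum_congr rfl fun ω _ => ?_
  simp [measureReal_def, Measure.pi_singleton, ENNReal.toReal_prod]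

lemma measureReal_occupancy_eq_mul_poissonMeasure {x : ι → ℕ} (hx : ∑ c, x c = m) :
    (Measure.pi fun _ : Fin m => ν).real {ω | occupancy ω = x} * (poissonMeasure m).real {m} =
      (Measure.pi fun c => poissonMeasure (poissonRate m ν c)).real {x} := by
  have hexp : ∏ c, exp (-(m * ν.real {c})) = exp (-m) := by
    rw [← exp_sum, Finset.sum_neg_distrib, ← Finset.mul_sum, sum_measureReal_singleton]
    simp
  have hspec : (∏ c, ((x c)! : ℝ)) * Nat.multinomial Finset.univ x = m ! := by
    exact_mod_cast hx ▸ Nat.multinomial_spec Finset.univ x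
  have : 0 < ∏ c, ((x c)! : ℝ) := Finset.prod_pos fun c _ => by positivity
  rw [measureReal_occupancy_eq ν hx, measureReal_pi_poissonMeasure_singleton,
    poissonMeasure_real_singleton]
  simp only [coe_poissonRate, Finset.prod_div_distrib, Finset.prod_mul_distrib, mul_pow, hexp,
    Finset.prod_pow_eq_pow_sum, hx, NNReal.coe_natCast]
  rw [← hspec]
  have := (Nat.multinomial_pos Finset.univ x).ne'
  field_simp

lemma measureReal_occupancy_mem_mul_le (E : Set (ι → ℕ)) :
    (Measure.pi fun _ : Fin m => ν).real {ω | occupancy ω ∈ E} * (poissonMeasure m).real {m} ≤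
      (Measure.pi fun c => poissonMeasure (poissonRate m ν c)).real E := by
  classical
  set F : Finset (ι → ℕ) := {x ∈ Finset.univ.image (occupancy (m := m)) | x ∈ E} with hF
  have hpre : {ω : Fin m → ι | occupancy ω ∈ E} = occupancy ⁻¹' F := by
    ext ω
    simp [hF]
  have hsum : ∀ x ∈ F, ∑ c, x c = m := fun x hx => by
    obtain ⟨ω, -, rfl⟩ := Finset.mem_image.1 (Finset.mem_filter.1 hx).1
    exact sum_occupancy ω
  calc _ = ∑ x ∈ F, (Measure.pi fun _ : Fin m => ν).real {ω | occupancy ω = x} *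
          (poissonMeasure m).real {m} := by
        rw [hpre, ← sum_measureReal_preimage_singleton F fun _ _ => .of_discrete, Finset.sum_mul]
        rfl
    _ = ∑ x ∈ F, (Measure.pi fun c => poissonMeasure (poissonRate m ν c)).real {x} :=
        Finset.sum_congr rfl fun x hx =>
          measureReal_occupancy_eq_mul_poissonMeasure ν (hsum x hx)
    _ = (Measure.pi fun c => poissonMeasure (poissonRate m ν c)).real F :=
        sum_measureReal_singleton F
    _ ≤ _ := measureReal_mono fun x hx => (Finset.mem_filter.1 hx).2

end Occupancy

lemma factorial_le_exp_one_mul_sqrt_mul_pow {m : ℕ} (hm : m ≠ 0) :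
    (m ! : ℝ) ≤ exp 1 * √m * (m / exp 1) ^ m := by
  obtain ⟨k, rfl⟩ := Nat.exists_eq_succ_of_ne_zero hm
  have h : Stirling.stirlingSeq (k + 1) ≤ Stirling.stirlingSeq 1 :=
    Stirling.stirlingSeq'_antitone k.zero_le
  rw [Stirling.stirlingSeq_one, Stirling.stirlingSeq, div_le_div_iff₀ (by positivity)
    (by positivity), sqrt_mul zero_le_two] at h
  have h2 : (0 : ℝ) < √2 := by positivity
  refine le_of_mul_le_mul_right (h.trans_eq ?_) h2
  simp only [Nat.succ_eq_add_one]
  ring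

lemma one_le_mul_sqrt_mul_poissonMeasure_singleton {m : ℕ} (hm : m ≠ 0) :
    1 ≤ exp 1 * √m * (poissonMeasure m).real {m} := by
  have h : exp (-m) * (m : ℝ) ^ m = (m / exp 1) ^ m := by
    rw [div_pow, ← exp_nat_mul, mul_one, exp_neg, div_eq_inv_mul]
  rw [poissonMeasure_real_singleton, NNReal.coe_natCast, h, ← mul_div_assoc,
    one_le_div₀ (by positivity)]
  exact factorial_le_exp_one_mul_sqrt_mul_pow hm

lemma poissonMeasure_real_Iio_le (r : ℝ≥0) (k : ℕ) :
    (poissonMeasure r).real (Set.Iio k) ≤ exp (-(poissonMeasure r).real {k}) := by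
  calc (poissonMeasure r).real (Set.Iio k) ≤ (poissonMeasure r).real {k}ᶜ :=
        measureReal_mono fun i hi => (Set.mem_Iio.1 hi).ne
    _ = 1 - (poissonMeasure r).real {k} := probReal_compl_eq_one_sub (.singleton k)
    _ ≤ _ := one_sub_le_exp_neg _

lemma measureReal_forall_occupancy_lt_le {ι : Type*} [Finite ι] [DecidableEq ι]
    [MeasurableSpace ι] [MeasurableSingletonClass ι] (ν : Measure ι) [IsProbabilityMeasure ν]
    {m : ℕ} (hm : m ≠ 0) (D : Finset ι) (k : ℕ) :
    (Measure.pi fun _ : Fin m => ν).real {ω | ∀ c ∈ D, occupancy ω c < k} ≤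
      exp 1 * √m * exp (-∑ c ∈ D, (poissonMeasure (poissonRate m ν c)).real {k}) := by
  have := Fintype.ofFinite ι
  set E : Set (ι → ℕ) := (D : Set ι).pi fun _ => Set.Iio k
  have hpi : (Measure.pi fun c => poissonMeasure (poissonRate m ν c)).real E ≤
      exp (-∑ c ∈ D, (poissonMeasure (poissonRate m ν c)).real {k}) := by
    rw [measureReal_def, Measure.pi_pi_finset, ENNReal.toReal_prod, ← Finset.sum_neg_distrib,
      exp_sum]
    exact Finset.prod_le_prod (fun _ _ => measureReal_nonneg) fun c _ =>
      poissonMeasure_real_Iio_le _ k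
  have hE := (measureReal_occupancy_mem_mul_le (m := m) ν E).trans hpi
  calc (Measure.pi fun _ : Fin m => ν).real {ω | occupancy ω ∈ E}
      ≤ (Measure.pi fun _ : Fin m => ν).real {ω | occupancy ω ∈ E} *
          (exp 1 * √m * (poissonMeasure m).real {m}) :=
        le_mul_of_one_le_right measureReal_nonneg (one_le_mul_sqrt_mul_poissonMeasure_singleton hm)
    _ = exp 1 * √m * ((Measure.pi fun _ : Fin m => ν).real {ω | occupancy ω ∈ E} *
          (poissonMeasure m).real {m}) := by ring
    _ ≤ _ := by gcongr

section MaximalInequality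

variable {Ω ι : Type*} [MeasurableSpace Ω] [Nonempty ι] {μ : Measure Ω} {X : ι → Ω → ℝ}

lemma abs_ciSup_le_sum_abs [Fintype ι] (x : ι → ℝ) : |⨆ i, x i| ≤ ∑ i, |x i| := by
  obtain ⟨i, hi⟩ := exists_eq_ciSup_of_finite (f := x)
  rw [← hi]
  exact Finset.single_le_sum (f := fun i => |x i|) (fun _ _ => abs_nonneg _) (Finset.mem_univ i)

lemma integrable_ciSup [Finite ι] (hX : ∀ i, Integrable (X i) μ) :
    Integrable (fun ω => ⨆ i, X i ω) μ := by
  have := Fintype.ofFinite ι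
  exact (integrable_finsetSum Finset.univ fun i _ => (hX i).abs).mono'
    (AEMeasurable.iSup fun i => (hX i).aemeasurable).aestronglyMeasurable
    (ae_of_all _ fun ω => abs_ciSup_le_sum_abs fun i => X i ω)

lemma exp_mul_ciSup_le_sum_exp [Fintype ι] (θ : ℝ) (x : ι → ℝ) :
    exp (θ * ⨆ i, x i) ≤ ∑ i, exp (θ * x i) := by
  obtain ⟨i, hi⟩ := exists_eq_ciSup_of_finite (f := x)
  rw [← hi]
  exact Finset.single_le_sum (f := fun i => exp (θ * x i)) (fun _ _ => (exp_pos _).le)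
    (Finset.mem_univ i)

lemma mul_integral_ciSup_le_log_sum_mgf [Fintype ι] [IsProbabilityMeasure μ] (θ : ℝ)
    (hX : ∀ i, Integrable (X i) μ) (hexp : ∀ i, Integrable (fun ω => exp (θ * X i ω)) μ) :
    θ * ∫ ω, ⨆ i, X i ω ∂μ ≤ log (∑ i, mgf (X i) μ θ) := by
  have hsup := (integrable_ciSup hX).const_mul θ
  have hsum := integrable_finsetSum Finset.univ fun i _ => hexp i
  have hbound : ∀ ω, exp (θ * ⨆ i, X i ω) ≤ ∑ i, exp (θ * X i ω) := fun ω =>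
    exp_mul_ciSup_le_sum_exp θ fun i => X i ω
  have hexp_sup : Integrable (fun ω => exp (θ * ⨆ i, X i ω)) μ :=
    hsum.mono' (continuous_exp.comp_aestronglyMeasurable hsup.aestronglyMeasurable) <|
      ae_of_all _ fun ω => by simpa only [norm_eq_abs, abs_exp] using hbound ω
  have hjensen : exp (θ * ∫ ω, ⨆ i, X i ω ∂μ) ≤ ∑ i, mgf (X i) μ θ := calc
    exp (θ * ∫ ω, ⨆ i, X i ω ∂μ) = exp (∫ ω, θ * ⨆ i, X i ω ∂μ) := by rw [integral_const_mul]
    _ ≤ ∫ ω, exp (θ * ⨆ i, X i ω) ∂μ :=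
      convexOn_exp.map_integral_le continuous_exp.continuousOn isClosed_univ
        (ae_of_all _ fun _ => Set.mem_univ _) hsup hexp_sup
    _ ≤ ∫ ω, ∑ i, exp (θ * X i ω) ∂μ := integral_mono hexp_sup hsum hbound
    _ = ∑ i, mgf (X i) μ θ := integral_finsetSum _ fun i _ => hexp i
  exact (le_log_iff_exp_le ((exp_pos _).trans_le hjensen)).2 hjensen

end MaximalInequality

lemma mgf_sum_pi {κ α : Type*} [Fintype κ] [MeasurableSpace α] (μ : Measure α) [SigmaFinite μ]
    (f : α → ℝ) (θ : ℝ) :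
    mgf (fun ω : κ → α => ∑ k, f (ω k)) (Measure.pi fun _ => μ) θ =
      mgf f μ θ ^ Fintype.card κ := by
  simp only [mgf, Finset.mul_sum, exp_sum]
  exact integral_fintype_prod_eq_pow fun c => exp (θ * f c)

section Grid

variable {m n : ℕ}

lemma cellMeasure_real_singleton (c : Fin n × Fin n) :
    (cellMeasure n).real {c} = ((n : ℝ) ^ 2)⁻¹ := by
  simp [measureReal_def, cellMeasure]

lemma integral_cellMeasure (f : Fin n × Fin n → ℝ) :
    ∫ c, f c ∂cellMeasure n = ((n : ℝ) ^ 2)⁻¹ * ∑ c, f c := by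
  simp [cellMeasure, integral_smul_measure, integral_count]

instance isProbabilityMeasure_cellMeasure [NeZero n] : IsProbabilityMeasure (cellMeasure n) where
  measure_univ := by
    have h : (n : ENNReal) ≠ 0 := Nat.cast_ne_zero.2 (NeZero.ne n)
    simp [cellMeasure, ← sq, ENNReal.inv_mul_cancel, h]

instance isProbabilityMeasure_gridMeasure [NeZero n] : IsProbabilityMeasure (gridMeasure m n) := by
  unfold gridMeasure
  infer_instance

lemma assignSum_eq_sum_ite (σ : Equiv.Perm (Fin n)) (ω : Fin m → Fin n × Fin n) :
    assignSum σ ω = ∑ k, if σ (ω k).1 = (ω k).2 then (1 : ℝ) else 0 := by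
  simp only [assignSum, cellCount, Finset.card_filter, Nat.cast_sum, Nat.cast_ite, Nat.cast_one,
    Nat.cast_zero]
  rw [Finset.sum_comm]
  refine Finset.sum_congr rfl fun k _ => ?_
  simp [Prod.ext_iff, ite_and, eq_comm]

lemma assignSum_le_maxAssign (σ : Equiv.Perm (Fin n)) (ω : Fin m → Fin n × Fin n) :
    assignSum σ ω ≤ maxAssign ω :=
  le_ciSup (f := fun σ => assignSum σ ω) (Set.finite_range _).bddAbove σ

lemma maxAssign_nonneg (ω : Fin m → Fin n × Fin n) : 0 ≤ maxAssign ω :=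
  iSup_nonneg fun _ => Finset.sum_nonneg fun _ _ => Nat.cast_nonneg _

lemma mgf_graph_indicator_cellMeasure [NeZero n] (σ : Equiv.Perm (Fin n)) (θ : ℝ) :
    mgf (fun c => if σ c.1 = c.2 then 1 else 0) (cellMeasure n) θ = 1 + (exp θ - 1) / n := by
  have hsplit : ∀ c : Fin n × Fin n, exp (θ * if σ c.1 = c.2 then 1 else 0) =
      (if σ c.1 = c.2 then exp θ - 1 else 0) + 1 := fun c => by split_ifs <;> simp
  have hn : (n : ℝ) ≠ 0 := Nat.cast_ne_zero.2 (NeZero.ne n)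
  simp only [mgf, integral_cellMeasure, hsplit, Finset.sum_add_distrib, Fintype.sum_prod_type,
    Finset.sum_ite_eq, Finset.mem_univ, if_true, Finset.sum_const, Finset.card_univ,
    Fintype.card_prod, Fintype.card_fin, nsmul_eq_mul, Nat.cast_mul]
  field_simp
  ring

lemma mgf_assignSum [NeZero n] (σ : Equiv.Perm (Fin n)) (θ : ℝ) :
    mgf (assignSum σ) (gridMeasure m n) θ = (1 + (exp θ - 1) / n) ^ m := by
  simpa only [gridMeasure, Fintype.card_fin, ← assignSum_eq_sum_ite,
    mgf_graph_indicator_cellMeasure] using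
    mgf_sum_pi (κ := Fin m) (cellMeasure n) (fun c => if σ c.1 = c.2 then 1 else 0) θ

lemma mgf_assignSum_le [NeZero n] (σ : Equiv.Perm (Fin n)) (θ : ℝ) :
    mgf (assignSum σ) (gridMeasure m n) θ ≤ exp (m / n * exp θ) := by
  have hn : (1 : ℝ) ≤ n := Nat.one_le_cast.2 NeZero.one_le
  rw [mgf_assignSum, div_mul_comm, mul_comm _ (m : ℝ), exp_nat_mul]
  have hinv : (1 : ℝ) / n ≤ 1 := (div_le_one₀ (by positivity)).2 hn
  have hθ : 0 ≤ exp θ / n := by positivity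
  rw [sub_div]
  refine pow_le_pow_left₀ (by linarith) ?_ m
  linarith [add_one_le_exp (exp θ / n), show (0 : ℝ) ≤ 1 / n by positivity]

lemma mul_EmaxAssign_le [NeZero n] (θ : ℝ) :
    θ * EmaxAssign m n ≤ n * log n + m / n * exp θ := by
  have hn : (0 : ℝ) < n := Nat.cast_pos.2 (NeZero.pos n)
  have hsum : ∑ σ : Equiv.Perm (Fin n), mgf (assignSum σ) (gridMeasure m n) θ ≤
      (n : ℝ) ^ n * exp (m / n * exp θ) := calc
    _ ≤ ∑ _σ : Equiv.Perm (Fin n), exp (m / n * exp θ) :=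
      Finset.sum_le_sum fun σ _ => mgf_assignSum_le σ θ
    _ = n ! * exp (m / n * exp θ) := by simp [Fintype.card_perm]
    _ ≤ (n : ℝ) ^ n * exp (m / n * exp θ) := by
      gcongr
      exact_mod_cast n.factorial_le_pow
  have hpos : 0 < ∑ σ : Equiv.Perm (Fin n), mgf (assignSum σ) (gridMeasure m n) θ :=
    Finset.sum_pos (fun _ _ => mgf_pos .of_finite) Finset.univ_nonempty
  calc θ * EmaxAssign m n
      ≤ log (∑ σ : Equiv.Perm (Fin n), mgf (assignSum σ) (gridMeasure m n) θ) :=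
        mul_integral_ciSup_le_log_sum_mgf θ (fun _ => .of_finite) fun _ => .of_finite
    _ ≤ log ((n : ℝ) ^ n * exp (m / n * exp θ)) := log_le_log hpos hsum
    _ = n * log n + m / n * exp θ := by
      rw [log_mul (by positivity) (by positivity), log_pow, log_exp]

-- Take `σ` with the fewest bad rows: were `(i, σ j)` good, swapping the values of `σ` at `i` and
-- `j` would remove the bad row `i` and create none.
lemma exists_perm_forall_not_imp_not {α : Type*} [Finite α] (r : α → α → Prop) :
    ∃ σ : Equiv.Perm α, ∀ i j, ¬ r i (σ i) → ¬ r j (σ j) → ¬ r i (σ j) := by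
  classical
  obtain ⟨σ, hσ⟩ := Finite.exists_min fun σ : Equiv.Perm α => {i | ¬ r i (σ i)}.ncard
  refine ⟨σ, fun i j hi hj hij => (hσ (σ * Equiv.swap i j)).not_gt ?_⟩
  refine Set.ncard_lt_ncard ((Set.ssubset_iff_of_subset fun l hl => ?_).2 ⟨i, hi, ?_⟩)
    (Set.toFinite _)
  · rcases eq_or_ne l i with rfl | hli
    · exact hi
    rcases eq_or_ne l j with rfl | hlj
    · exact hj
    simpa [Equiv.swap_apply_of_ne_of_ne hli hlj] using hl
  · simpa using hij

lemma exists_rectangle_cellCount_lt (k : ℕ) (ω : Fin m → Fin n × Fin n) :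
    ∃ A B : Finset (Fin n), A.card = B.card ∧ (∀ a ∈ A, ∀ b ∈ B, cellCount a b ω < k) ∧
      (k : ℝ) * (n - A.card) ≤ maxAssign ω := by
  obtain ⟨σ, hσ⟩ := exists_perm_forall_not_imp_not fun i j => k ≤ cellCount i j ω
  set A : Finset (Fin n) := {i | cellCount i (σ i) ω < k}
  refine ⟨A, A.map σ.toEmbedding, (Finset.card_map _).symm, fun a ha b hb => ?_, ?_⟩
  · obtain ⟨a', ha', rfl⟩ := Finset.mem_map.1 hb
    simp only [A, Finset.mem_filter, Finset.mem_univ, true_and] at ha ha'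
    exact not_le.1 (hσ a a' ha.not_ge ha'.not_ge)
  · calc (k : ℝ) * (n - A.card) = ∑ _i ∈ Aᶜ, (k : ℝ) := by
          rw [Finset.sum_const, nsmul_eq_mul, Finset.card_compl, Fintype.card_fin,
            Nat.cast_sub (by simpa using A.card_le_univ), mul_comm]
      _ ≤ ∑ i ∈ Aᶜ, (cellCount i (σ i) ω : ℝ) :=
          Finset.sum_le_sum fun i hi => Nat.cast_le.2 (by simpa [A] using hi)
      _ ≤ assignSum σ ω :=
          Finset.sum_le_sum_of_subset_of_nonneg (Finset.subset_univ _) fun _ _ _ =>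
            Nat.cast_nonneg _
      _ ≤ maxAssign ω := assignSum_le_maxAssign σ ω

/-- The expected number of points in a cell, `m p_n`; it serves as a Poisson rate, whence the
nonnegative values. -/
def cellMean (m n : ℕ) : ℝ≥0 := m / n ^ 2

lemma coe_cellMean : (cellMean m n : ℝ) = m / (n : ℝ) ^ 2 := by
  simp [cellMean]

lemma cellMean_pos (hm : 0 < m) (hn : 0 < n) : 0 < cellMean m n := by
  unfold cellMean
  positivity

lemma poissonRate_cellMeasure (c : Fin n × Fin n) :
    poissonRate m (cellMeasure n) c = cellMean m n := by
  ext
  rw [coe_poissonRate, cellMeasure_real_singleton, coe_cellMean, div_eq_mul_inv]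

lemma measureReal_rectangle_cellCount_lt_le [NeZero n] (hm : m ≠ 0) (k : ℕ)
    (A B : Finset (Fin n)) :
    (gridMeasure m n).real {ω | ∀ a ∈ A, ∀ b ∈ B, cellCount a b ω < k} ≤
      exp 1 * √m * exp (-((poissonMeasure (cellMean m n)).real {k} * (A.card * B.card))) := by
  have h := measureReal_forall_occupancy_lt_le (cellMeasure n) hm (A ×ˢ B) k
  simp only [poissonRate_cellMeasure, Finset.sum_const, Finset.card_product, nsmul_eq_mul,
    Nat.cast_mul, Finset.mem_product, Prod.forall, and_imp] at h
  rw [mul_comm (poissonMeasure _ |>.real _)]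
  refine le_trans (measureReal_mono fun ω hω a b ha hb => hω a ha b hb) h

/-- A bound for the probability that some rectangle with more than `ε n` rows and as many columns
has all its cell counts below `k`: the number `4 ^ n` of pairs of subsets of `Fin n` times a bound
for one such rectangle. -/
def rectangleBound (m n k : ℕ) (ε : ℝ) : ℝ :=
  4 ^ n * (exp 1 * √m * exp (-((poissonMeasure (cellMean m n)).real {k} * (ε * n) ^ 2)))

lemma measureReal_maxAssign_lt_le [NeZero n] (hm : m ≠ 0) (k : ℕ) {ε : ℝ} (hε : 0 ≤ ε) :
    (gridMeasure m n).real {ω | maxAssign ω < k * ((1 - ε) * n)} ≤ rectangleBound m n k ε := by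
  set P : Finset (Finset (Fin n) × Finset (Fin n)) :=
    {AB | ε * n < AB.1.card ∧ AB.1.card = AB.2.card}
  have hcover : {ω : Fin m → Fin n × Fin n | maxAssign ω < k * ((1 - ε) * n)} ⊆
      ⋃ AB ∈ P, {ω | ∀ a ∈ AB.1, ∀ b ∈ AB.2, cellCount a b ω < k} := by
    intro ω hω
    obtain ⟨A, B, hAB, hlt, hmax⟩ := exists_rectangle_cellCount_lt k ω
    have h := lt_of_mul_lt_mul_left (hmax.trans_lt hω) k.cast_nonneg
    have hεA : ε * n < A.card := by linarith
    exact Set.mem_biUnion (x := (A, B))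
      (Finset.mem_filter.2 ⟨Finset.mem_univ _, hεA, hAB⟩) hlt
  have hrect : ∀ AB ∈ P,
      (gridMeasure m n).real {ω | ∀ a ∈ AB.1, ∀ b ∈ AB.2, cellCount a b ω < k} ≤
        exp 1 * √m * exp (-((poissonMeasure (cellMean m n)).real {k} * (ε * n) ^ 2)) := by
    intro AB hAB
    obtain ⟨hlt, hcard⟩ : ε * n < AB.1.card ∧ AB.1.card = AB.2.card := by simpa [P] using hAB
    refine (measureReal_rectangle_cellCount_lt_le hm k AB.1 AB.2).trans ?_
    rw [← hcard, ← sq]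
    gcongr
  have hcard : (P.card : ℝ) ≤ 4 ^ n := by
    have h : P.card ≤ 2 ^ n * 2 ^ n := by simpa using P.card_le_univ
    rw [← mul_pow] at h
    exact_mod_cast h
  calc _
      ≤ ∑ AB ∈ P, (gridMeasure m n).real {ω | ∀ a ∈ AB.1, ∀ b ∈ AB.2, cellCount a b ω < k} :=
        (measureReal_mono hcover (measure_ne_top _ _)).trans (measureReal_biUnion_finset_le _ _)
    _ ≤ P.card • (exp 1 * √m *
          exp (-((poissonMeasure (cellMean m n)).real {k} * (ε * n) ^ 2))) :=
        Finset.sum_le_card_nsmul _ _ _ hrect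
    _ ≤ rectangleBound m n k ε := by
        rw [nsmul_eq_mul, rectangleBound]
        gcongr

lemma mul_one_sub_rectangleBound_le_EmaxAssign [NeZero n] (hm : m ≠ 0) (k : ℕ) {ε : ℝ}
    (hε : 0 ≤ ε) (hε1 : ε ≤ 1) :
    k * ((1 - ε) * n) * (1 - rectangleBound m n k ε) ≤ EmaxAssign m n := by
  have hcompl : {ω : Fin m → Fin n × Fin n | k * ((1 - ε) * n) ≤ maxAssign ω} =
      {ω | maxAssign ω < k * ((1 - ε) * n)}ᶜ := by
    ext ω
    simp
  calc k * ((1 - ε) * n) * (1 - rectangleBound m n k ε)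
      ≤ k * ((1 - ε) * n) * (gridMeasure m n).real {ω | k * ((1 - ε) * n) ≤ maxAssign ω} := by
        rw [hcompl, probReal_compl_eq_one_sub .of_discrete]
        have := sub_nonneg.2 hε1
        gcongr
        exact measureReal_maxAssign_lt_le hm k hε
    _ ≤ EmaxAssign m n :=
        mul_meas_ge_le_integral_of_nonneg (ae_of_all _ maxAssign_nonneg) .of_finite _

end Grid

lemma exp_neg_add_mul_log_le_poissonMeasure_singleton {r : ℝ≥0} (hr : 0 < r) {x : ℝ} (hx : 0 < x)
    {k : ℕ} (hkx : k ≤ x) :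
    exp (-(r + k * log (x / r))) ≤ (poissonMeasure r).real {k} := by
  have hfact : (k ! : ℝ) ≤ x ^ k := calc
    (k ! : ℝ) ≤ (k : ℝ) ^ k := by exact_mod_cast k.factorial_le_pow
    _ ≤ x ^ k := by gcongr
  have : (0 : ℝ) < r := hr
  calc exp (-(r + k * log (x / r))) = exp (-r) * r ^ k / x ^ k := by
        rw [neg_add, exp_add, exp_neg (k * _), exp_nat_mul, exp_log (by positivity), div_pow,
          inv_div, mul_div_assoc]
    _ ≤ exp (-r) * r ^ k / k ! := by gcongr
    _ = (poissonMeasure r).real {k} := (poissonMeasure_real_singleton r k).symm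

/-- `log (log n / (m p_n))`, the factor by which `E[max_σ S(σ)]` falls short of `n log n`. -/
def logRatio (m n : ℕ) : ℝ := log (log n / cellMean m n)

/-- The ratio of `E[max_σ S(σ)]` to its asymptotic value `n log n / log (log n / (m p_n))`. -/
def normalizedMax (m n : ℕ) : ℝ := EmaxAssign m n * logRatio m n / (n * log n)

section FixedSize

variable {m n : ℕ}

lemma cellMean_mul_exp_logRatio (hm : 0 < m) (hn : 1 < n) :
    cellMean m n * exp (logRatio m n) = log n := by
  have hl : (0 : ℝ) < cellMean m n := cellMean_pos hm (zero_lt_one.trans hn)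
  have hL : 0 < log n := log_pos (Nat.one_lt_cast.2 hn)
  rw [logRatio, exp_log (by positivity), mul_div_cancel₀ _ hl.ne']

lemma mul_normalizedMax_le (hm : 0 < m) (hn : 1 < n) (c : ℝ) :
    c * normalizedMax m n ≤ 1 + exp (-((1 - c) * logRatio m n)) := by
  have : NeZero n := ⟨by lia⟩
  have : (0 : ℝ) < n := Nat.cast_pos.2 (by lia)
  have hL : 0 < log n := log_pos (Nat.one_lt_cast.2 hn)
  have hpoints : (m / n : ℝ) * exp (c * logRatio m n) =
      n * log n * exp (-((1 - c) * logRatio m n)) := by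
    rw [← cellMean_mul_exp_logRatio hm hn, mul_assoc (n : ℝ), mul_assoc (cellMean m n : ℝ),
      ← exp_add, ← mul_assoc, coe_cellMean]
    congr 1
    · field_simp
    · ring_nf
  have h := mul_EmaxAssign_le (m := m) (n := n) (c * logRatio m n)
  rw [hpoints, ← mul_one_add, ← div_le_iff₀' (by positivity)] at h
  calc c * normalizedMax m n = c * logRatio m n * EmaxAssign m n / (n * log n) := by
        rw [normalizedMax]
        ring
    _ ≤ _ := h

lemma le_normalizedMax (hm : 0 < m) (hn : 1 < n) {c : ℝ} (hc0 : 0 ≤ c) (hc1 : c ≤ 1) {k : ℕ}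
    (hk : c * log n ≤ k * logRatio m n) (hΛ : 0 ≤ logRatio m n)
    (hR : rectangleBound m n k (1 - c) ≤ 1) :
    c ^ 2 * (1 - rectangleBound m n k (1 - c)) ≤ normalizedMax m n := by
  have : NeZero n := ⟨by lia⟩
  have : (0 : ℝ) < n := Nat.cast_pos.2 (by lia)
  have hL : 0 < log n := log_pos (Nat.one_lt_cast.2 hn)
  have hE := mul_one_sub_rectangleBound_le_EmaxAssign (m := m) (n := n) hm.ne' k
    (sub_nonneg.2 hc1) (sub_le_self 1 hc0)
  rw [sub_sub_cancel] at hE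
  rw [normalizedMax, le_div_iff₀ (by positivity)]
  have := sub_nonneg.2 hR
  calc c ^ 2 * (1 - rectangleBound m n k (1 - c)) * (n * log n)
      = c * log n * (c * n * (1 - rectangleBound m n k (1 - c))) := by ring
    _ ≤ k * logRatio m n * (c * n * (1 - rectangleBound m n k (1 - c))) := by gcongr
    _ = k * (c * n) * (1 - rectangleBound m n k (1 - c)) * logRatio m n := by ring
    _ ≤ EmaxAssign m n * logRatio m n := by gcongr

lemma rectangleBound_le (hmn : m ≤ n ^ 4) (k : ℕ) (ε : ℝ) :
    rectangleBound m n k ε ≤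
      exp (1 + n * (4 - ε ^ 2 * (n * (poissonMeasure (cellMean m n)).real {k}))) := by
  have hfour : (4 : ℝ) ^ n ≤ exp (2 * n) := by
    have h : (2 : ℝ) ≤ exp 1 := by linarith [add_one_le_exp (1 : ℝ)]
    calc (4 : ℝ) ^ n = 2 ^ (2 * n) := by rw [pow_mul]; norm_num
      _ ≤ exp 1 ^ (2 * n) := by gcongr
      _ = exp (2 * n) := by rw [exp_one_pow]; push_cast; rfl
  have hsqrt : √m ≤ exp (2 * n) := by
    have h : (n : ℝ) ≤ exp n := by linarith [add_one_le_exp (n : ℝ)]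
    calc √m ≤ √(((n : ℝ) ^ 2) ^ 2) := sqrt_le_sqrt (by rw [← pow_mul]; exact_mod_cast hmn)
      _ = (n : ℝ) ^ 2 := sqrt_sq (by positivity)
      _ ≤ exp n ^ 2 := by gcongr
      _ = exp (2 * n) := (exp_nat_mul _ 2).symm
  calc rectangleBound m n k ε
      ≤ exp (2 * n) * (exp 1 * exp (2 * n) *
          exp (-((poissonMeasure (cellMean m n)).real {k} * (ε * n) ^ 2))) := by
        unfold rectangleBound
        gcongr
    _ = _ := by
        simp only [← exp_add]
        ring_nf

lemma exp_le_mul_poissonMeasure_singleton (hm : 0 < m) (hn : 1 < n) {c : ℝ} {k : ℕ}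
    (hk : k ≤ log n) (hkΛ : k * logRatio m n ≤ c * log n + logRatio m n) :
    exp (log n * (1 - c - cellMean m n / log n - logRatio m n / log n)) ≤
      n * (poissonMeasure (cellMean m n)).real {k} := by
  have hL : 0 < log n := log_pos (Nat.one_lt_cast.2 hn)
  have hn0 : (0 : ℝ) < n := Nat.cast_pos.2 (by lia)
  calc exp (log n * (1 - c - cellMean m n / log n - logRatio m n / log n))
      = exp (log n - (cellMean m n + (c * log n + logRatio m n))) := by
        congr 1
        field_simp
        ring
    _ ≤ exp (log n - (cellMean m n + k * logRatio m n)) := by gcongr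
    _ = n * exp (-(cellMean m n + k * log (log n / cellMean m n))) := by
        rw [sub_eq_add_neg, exp_add, exp_log hn0, logRatio]
    _ ≤ n * (poissonMeasure (cellMean m n)).real {k} := by
        gcongr
        exact exp_neg_add_mul_log_le_poissonMeasure_singleton
          (cellMean_pos hm (zero_lt_one.trans hn)) hL hk

end FixedSize

section Asymptotics

variable {m : ℕ → ℕ}

lemma tendsto_log_natCast_atTop : Tendsto (fun n : ℕ => log n) atTop atTop :=
  tendsto_log_atTop.comp tendsto_natCast_atTop_atTop

lemma tendsto_logRatio_atTop (hm : ∀ n, 0 < m n)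
    (h0 : Tendsto (fun n => cellMean (m n) n / log n) atTop (𝓝 0)) :
    Tendsto (fun n => logRatio (m n) n) atTop atTop := by
  have hpos : ∀ᶠ n : ℕ in atTop, cellMean (m n) n / log n ∈ Set.Ioi 0 := by
    filter_upwards [eventually_gt_atTop 1] with n hn
    exact div_pos (NNReal.coe_pos.2 (cellMean_pos (hm n) (zero_lt_one.trans hn)))
      (log_pos (Nat.one_lt_cast.2 hn))
  refine tendsto_log_atTop.comp <|
    (tendsto_nhdsWithin_iff.2 ⟨h0, hpos⟩).inv_tendsto_nhdsGT_zero.congr fun n => ?_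
  simp

lemma tendsto_logRatio_div_log (hm : ∀ n, 0 < m n)
    (h0 : Tendsto (fun n => cellMean (m n) n / log n) atTop (𝓝 0))
    (hδ : ∀ δ : ℝ, 0 < δ → Tendsto (fun n : ℕ => (n : ℝ) ^ δ * cellMean (m n) n) atTop atTop) :
    Tendsto (fun n => logRatio (m n) n / log n) atTop (𝓝 0) := by
  refine tendsto_order.2 ⟨fun a ha => ?_, fun a ha => ?_⟩
  · filter_upwards [(tendsto_logRatio_atTop hm h0).eventually_ge_atTop 0] with n hΛ
    exact ha.trans_le (div_nonneg hΛ (log_natCast_nonneg n))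
  · have hlog : ∀ᶠ n : ℕ in atTop, ‖log n‖ ≤ 1 * ‖(n : ℝ) ^ (a / 2)‖ :=
      tendsto_natCast_atTop_atTop.eventually
        ((isLittleO_log_rpow_atTop (half_pos ha)).bound one_pos)
    filter_upwards [eventually_gt_atTop 1, hlog, (hδ _ (half_pos ha)).eventually_gt_atTop 1]
      with n hn hlog hmean
    have hn0 : (0 : ℝ) < n := Nat.cast_pos.2 (by lia)
    have hL : 0 < log n := log_pos (Nat.one_lt_cast.2 hn)
    have hl : (0 : ℝ) < cellMean (m n) n := cellMean_pos (hm n) (zero_lt_one.trans hn)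
    rw [one_mul, norm_of_nonneg hL.le, norm_of_nonneg (by positivity)] at hlog
    have hratio : log n / cellMean (m n) n < (n : ℝ) ^ a := calc
      log n / cellMean (m n) n ≤ (n : ℝ) ^ (a / 2) / cellMean (m n) n := by gcongr
      _ < (n : ℝ) ^ (a / 2) * (n : ℝ) ^ (a / 2) := by
        rw [div_lt_iff₀ hl, mul_assoc]
        exact lt_mul_of_one_lt_right (by positivity) hmean
      _ = (n : ℝ) ^ a := by rw [← rpow_add hn0, add_halves]
    rw [div_lt_iff₀ hL, ← log_rpow hn0]
    exact log_lt_log (by positivity) hratio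

lemma eventually_normalizedMax_lt (hm : ∀ n, 0 < m n)
    (hΛ : Tendsto (fun n => logRatio (m n) n) atTop atTop) {b : ℝ} (hb : 1 < b) :
    ∀ᶠ n in atTop, normalizedMax (m n) n < b := by
  obtain ⟨c, hbc, hc1⟩ := exists_between (inv_lt_one_of_one_lt₀ hb)
  have hc0 : 0 < c := (inv_pos.2 (zero_lt_one.trans hb)).trans hbc
  have hlim : Tendsto (fun n => 1 + exp (-((1 - c) * logRatio (m n) n))) atTop (𝓝 1) := by
    simpa using (tendsto_exp_neg_atTop_nhds_zero.comp
      (hΛ.const_mul_atTop (sub_pos.2 hc1))).const_add 1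
  have hcb : 1 < c * b := (inv_lt_iff_one_lt_mul₀ (zero_lt_one.trans hb)).1 hbc
  filter_upwards [eventually_gt_atTop 1, hlim.eventually_lt_const hcb] with n hn hlt
  exact lt_of_mul_lt_mul_left ((mul_normalizedMax_le (hm n) hn c).trans_lt hlt) hc0.le

lemma tendsto_rectangleBound (hm : ∀ n, 0 < m n)
    (h0 : Tendsto (fun n => cellMean (m n) n / log n) atTop (𝓝 0))
    (hΛL : Tendsto (fun n => logRatio (m n) n / log n) atTop (𝓝 0)) {c : ℝ} (hc : c < 1)
    {k : ℕ → ℕ} (hk : ∀ᶠ n : ℕ in atTop, k n ≤ log n)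
    (hkΛ : ∀ᶠ n : ℕ in atTop, k n * logRatio (m n) n ≤ c * log n + logRatio (m n) n) :
    Tendsto (fun n => rectangleBound (m n) n (k n) (1 - c)) atTop (𝓝 0) := by
  have hcells : Tendsto (fun n : ℕ => n * (poissonMeasure (cellMean (m n) n)).real {k n})
      atTop atTop := by
    have hexponent : Tendsto (fun n : ℕ =>
        log n * (1 - c - cellMean (m n) n / log n - logRatio (m n) n / log n)) atTop atTop :=
      tendsto_log_natCast_atTop.atTop_mul_pos (sub_pos.2 hc)
        (by simpa using (h0.const_sub (1 - c)).sub hΛL)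
    refine tendsto_atTop_mono' _ ?_ (tendsto_exp_atTop.comp hexponent)
    filter_upwards [eventually_gt_atTop 1, hk, hkΛ] with n hn hk hkΛ
    exact exp_le_mul_poissonMeasure_singleton (hm n) hn hk hkΛ
  have hbound : Tendsto (fun n : ℕ => exp (1 + n * (4 - (1 - c) ^ 2 *
      (n * (poissonMeasure (cellMean (m n) n)).real {k n})))) atTop (𝓝 0) := by
    refine tendsto_exp_atBot.comp <| tendsto_atBot_add_const_left _ 1 <|
      tendsto_natCast_atTop_atTop.atTop_mul_atBot₀ ?_
    simp only [sub_eq_add_neg (4 : ℝ)]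
    exact tendsto_atBot_add_const_left _ 4 <| tendsto_neg_atTop_atBot.comp <|
      hcells.const_mul_atTop (pow_pos (sub_pos.2 hc) 2)
  refine tendsto_of_tendsto_of_tendsto_of_le_of_le' tendsto_const_nhds hbound
    (Eventually.of_forall fun n => by unfold rectangleBound; positivity) ?_
  filter_upwards [eventually_gt_atTop 1, h0.eventually_le_const one_pos] with n hn hle
  refine rectangleBound_le ?_ _ _
  have hn0 : (0 : ℝ) < n := Nat.cast_pos.2 (by lia)
  have hL : 0 < log n := log_pos (Nat.one_lt_cast.2 hn)
  have hmean : (cellMean (m n) n : ℝ) ≤ n ^ 2 := by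
    nlinarith [(div_le_one hL).1 hle, log_le_self hn0.le, (Nat.one_lt_cast (α := ℝ)).2 hn]
  rw [coe_cellMean, div_le_iff₀ (by positivity), ← pow_add] at hmean
  exact_mod_cast hmean

lemma eventually_lt_normalizedMax (hm : ∀ n, 0 < m n)
    (h0 : Tendsto (fun n => cellMean (m n) n / log n) atTop (𝓝 0))
    (hΛ : Tendsto (fun n => logRatio (m n) n) atTop atTop)
    (hΛL : Tendsto (fun n => logRatio (m n) n / log n) atTop (𝓝 0)) {a : ℝ} (ha : a < 1) :
    ∀ᶠ n in atTop, a < normalizedMax (m n) n := by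
  have hsq : Tendsto (fun c : ℝ => c ^ 2) (𝓝[<] 1) (𝓝 1) :=
    ((continuous_pow 2).tendsto' 1 1 (one_pow 2)).mono_left nhdsWithin_le_nhds
  obtain ⟨c, hac, hc0, hc1⟩ :=
    ((hsq.eventually_const_lt ha).and (Ioo_mem_nhdsLT zero_lt_one)).exists
  let k (n : ℕ) : ℕ := ⌈c * log n / logRatio (m n) n⌉₊
  have hk_lt : ∀ᶠ n in atTop, k n * logRatio (m n) n ≤ c * log n + logRatio (m n) n := by
    filter_upwards [hΛ.eventually_gt_atTop 0] with n hΛ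
    have := Nat.ceil_lt_add_one (a := c * log n / logRatio (m n) n) (by positivity)
    calc k n * logRatio (m n) n ≤ (c * log n / logRatio (m n) n + 1) * logRatio (m n) n := by gcongr
      _ = c * log n + logRatio (m n) n := by field_simp
  have hk_le_log : ∀ᶠ n : ℕ in atTop, k n ≤ log n := by
    filter_upwards [hΛ.eventually_ge_atTop 1, hk_lt, hΛL.eventually_le_const (sub_pos.2 hc1),
      eventually_gt_atTop 1] with n hΛ1 hk hΛL hn
    rw [div_le_iff₀ (log_pos (Nat.one_lt_cast.2 hn))] at hΛL
    linarith [le_mul_of_one_le_right (k n).cast_nonneg hΛ1]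
  have hR := tendsto_rectangleBound hm h0 hΛL hc1 hk_le_log hk_lt
  have hlim : Tendsto (fun n => c ^ 2 * (1 - rectangleBound (m n) n (k n) (1 - c))) atTop
      (𝓝 (c ^ 2)) := by
    simpa using (hR.const_sub 1).const_mul (c ^ 2)
  filter_upwards [hlim.eventually_const_lt hac, hR.eventually_le_const one_pos,
    hΛ.eventually_gt_atTop 0, eventually_gt_atTop 1] with n ha hR hΛ hn
  have hk : c * log n ≤ k n * logRatio (m n) n := (div_le_iff₀ hΛ).1 (Nat.le_ceil _)
  exact ha.trans_le (le_normalizedMax (hm n) hn hc0.le hc1.le hk hΛ.le hR)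

end Asymptotics

/-- **Quasi-Poissonian zone.**  If `m(n) p_n / log n → 0` (with `p_n = n⁻²`) while
`n^δ m(n) p_n → ∞` for every `δ > 0`, then
`E[max_σ ∑ i, X_{i σ(i)}] = (n log n / log (log n / (m(n) p_n))) (1 + o(1))`. -/
theorem expected_max_quasiPoisson (m : ℕ → ℕ) (hm : ∀ n, 0 < m n)
    (h0 : Tendsto (fun n : ℕ => ((m n : ℝ) / (n : ℝ) ^ 2) / Real.log n) atTop (nhds 0))
    (hδ : ∀ δ : ℝ, 0 < δ →
      Tendsto (fun n : ℕ => (n : ℝ) ^ δ * ((m n : ℝ) / (n : ℝ) ^ 2)) atTop atTop) :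
    Tendsto
      (fun n : ℕ =>
        EmaxAssign (m n) n * Real.log (Real.log n / ((m n : ℝ) / (n : ℝ) ^ 2)) /
          ((n : ℝ) * Real.log n))
      atTop (nhds 1) := by
  simp only [← coe_cellMean] at h0 hδ ⊢
  have hΛ := tendsto_logRatio_atTop hm h0
  have hΛL := tendsto_logRatio_div_log hm h0 hδ
  exact tendsto_order.2 ⟨fun a ha => eventually_lt_normalizedMax hm h0 hΛ hΛL ha,
    fun b hb => eventually_normalizedMax_lt hm hΛ hb⟩

end
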